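/- arXiv:2403.05270 — 2 statements merged into one kernel-verified Lean document; each statement's English description precedes it below -/
import Mathlib

section
/- Let F be a family of pairwise intersecting, pairwise distinct circles in the plane ℝ² such that no two circles of F touch (i.e., every two distinct circles of F intersect in exactly two points). Suppose {C1, C2} and {C3, C4} are two distinct unordered pairs of circles of F, each of which creates a lens in the arrangement A(F), and let A1, A2, A3, A4 be the centers of C1, C2, C3, C4 respectively. Then the closed segments [A1, A2] and [A3, A4] are not avoiding. -/
open Metric Set

noncomputable section

/-- The Euclidean plane ℝ². -/
abbrev Plane := EuclideanSpace ℝ (Fin 2)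

/-- A circle in the plane: a center and a positive radius. -/
structure Circle2 where
  center : Plane
  radius : ℝ
  radius_pos : 0 < radius

instance : DecidableEq Circle2 := Classical.decEq _

/-- The circle itself, as a set of points. -/
def Circle2.sphere (C : Circle2) : Set Plane := Metric.sphere C.center C.radius

/-- The closed disc bounded by the circle. -/
def Circle2.disc (C : Circle2) : Set Plane := Metric.closedBall C.center C.radius

/-- Two circles of the family `F` create a lens in the arrangement `A(F)` if they
intersect in exactly two points and the interior of the intersection of their closed
discs is disjoint from every circle of `F`. -/
def CreatesLens (F : Finset Circle2) (C1 C2 : Circle2) : Prop :=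
  (C1.sphere ∩ C2.sphere).ncard = 2 ∧
    ∀ C ∈ F, interior (C1.disc ∩ C2.disc) ∩ C.sphere = ∅

/-- A set of points is in convex position if each point is a vertex of (i.e. is not in
the convex hull of the rest of) the set. -/
def ConvexPosition (s : Set Plane) : Prop :=
  ∀ x ∈ s, x ∉ convexHull ℝ (s \ {x})

/-- `a, b, c, d` are the vertices, in this cyclic order, of a convex quadrilateral:
they are pairwise distinct, in convex position, and the diagonals `[a,c]` and `[b,d]`
cross. -/
def ConvexQuadrilateral (a b c d : Plane) : Prop :=
  a ≠ b ∧ a ≠ c ∧ a ≠ d ∧ b ≠ c ∧ b ≠ d ∧ c ≠ d ∧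
  ConvexPosition {a, b, c, d} ∧
  (segment ℝ a c ∩ segment ℝ b d).Nonempty

/-- The closed segments `[a,b]` and `[c,d]` are avoiding: their endpoints are the
vertices of a convex quadrilateral in which the two segments are opposite sides. -/
def Avoiding (a b c d : Plane) : Prop :=
  ConvexQuadrilateral a b c d ∨ ConvexQuadrilateral a b d c

open Filter Topology

/-- Power of a point with respect to a circle. -/
def pw (C : Circle2) (x : Plane) : ℝ :=
  (x 0 - C.center 0) ^ 2 + (x 1 - C.center 1) ^ 2 - C.radius ^ 2

lemma dist_sq_coord (x y : Plane) : dist x y ^ 2 = (x 0 - y 0) ^ 2 + (x 1 - y 1) ^ 2 := by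
  rw [EuclideanSpace.dist_eq, Real.sq_sqrt (by positivity)]
  simp [Fin.sum_univ_two, Real.dist_eq, sq_abs]

lemma pw_eq (C : Circle2) (x : Plane) : pw C x = dist x C.center ^ 2 - C.radius ^ 2 := by
  rw [dist_sq_coord]; rfl

lemma mem_sphere_pw (C : Circle2) (x : Plane) : x ∈ C.sphere ↔ pw C x = 0 := by
  rw [pw_eq, Circle2.sphere, Metric.mem_sphere, sub_eq_zero,
    sq_eq_sq₀ dist_nonneg C.radius_pos.le]

lemma mem_ball_pw (C : Circle2) (x : Plane) : x ∈ Metric.ball C.center C.radius ↔ pw C x < 0 := by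
  rw [pw_eq, Metric.mem_ball, sub_neg, sq_lt_sq₀ dist_nonneg C.radius_pos.le]

lemma pw_continuous (C : Circle2) : Continuous (pw C) := by
  unfold pw; fun_prop

lemma ev_neg (B D : ℝ) (hB : B < 0) : ∀ᶠ ε : ℝ in 𝓝[>] 0, 2 * ε * B + ε ^ 2 * D < 0 := by
  have h : ∀ᶠ ε : ℝ in 𝓝 0, 2 * B + ε * D < 0 := by
    have : Continuous (fun ε : ℝ => 2 * B + ε * D) := by fun_prop
    apply this.continuousAt.eventually_lt continuousAt_const
    simp; linarith
  filter_upwards [h.filter_mono nhdsWithin_le_nhds, self_mem_nhdsWithin] with ε h1 h2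
  have h2 : 0 < ε := h2
  nlinarith [mul_neg_of_pos_of_neg h2 h1]

lemma ev_pw (C : Circle2) (P u : Plane) (h : pw C P < 0) :
    ∀ᶠ ε : ℝ in 𝓝[>] 0, pw C (P + ε • u) < 0 := by
  refine Filter.Eventually.filter_mono nhdsWithin_le_nhds ?_
  have : Continuous (fun ε : ℝ => pw C (P + ε • u)) := (pw_continuous C).comp (by fun_prop)
  apply this.continuousAt.eventually_lt continuousAt_const
  simpa using h

lemma pw_add (C : Circle2) (P u : Plane) (h : pw C P = 0) (ε : ℝ) :
    pw C (P + ε • u) = 2 * ε * (u 0 * (P 0 - C.center 0) + u 1 * (P 1 - C.center 1))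
      + ε ^ 2 * (u 0 ^ 2 + u 1 ^ 2) := by
  unfold pw at *
  simp only [PiLp.add_apply, PiLp.smul_apply, smul_eq_mul]
  linear_combination h

lemma enter (C1 C2 C3 : Circle2) (P Q : Plane) (hPQ : P ≠ Q) (hc : C1.center ≠ C3.center)
    (hP1 : pw C1 P = 0) (hP3 : pw C3 P = 0) (hQ1 : pw C1 Q = 0) (hQ3 : pw C3 Q = 0)
    (hP2 : pw C2 P < 0) : ∃ x, pw C1 x < 0 ∧ pw C2 x < 0 ∧ pw C3 x = 0 := by
  have hr1 := C1.radius_pos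
  have hr3 := C3.radius_pos
  obtain ⟨e0, he0⟩ : ∃ e, e = P 0 - C1.center 0 := ⟨_, rfl⟩
  obtain ⟨e1, he1⟩ : ∃ e, e = P 1 - C1.center 1 := ⟨_, rfl⟩
  obtain ⟨g0, hg0⟩ : ∃ e, e = P 0 - C3.center 0 := ⟨_, rfl⟩
  obtain ⟨g1, hg1⟩ : ∃ e, e = P 1 - C3.center 1 := ⟨_, rfl⟩
  obtain ⟨w0, hw0⟩ : ∃ e, e = Q 0 - P 0 := ⟨_, rfl⟩
  obtain ⟨w1, hw1⟩ : ∃ e, e = Q 1 - P 1 := ⟨_, rfl⟩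
  have hw : w0 ≠ 0 ∨ w1 ≠ 0 := by
    by_contra! h
    apply hPQ
    ext i
    fin_cases i
    · simp; linarith [h.1]
    · simp; linarith [h.2]
  have hwpos : 0 < w0 ^ 2 + w1 ^ 2 := by
    rcases hw with h | h <;> positivity
  have hee : e0 ^ 2 + e1 ^ 2 = C1.radius ^ 2 := by
    unfold pw at hP1; rw [he0, he1]; linarith
  have hgg : g0 ^ 2 + g1 ^ 2 = C3.radius ^ 2 := by
    unfold pw at hP3; rw [hg0, hg1]; linarith
  have hwe : w0 ^ 2 + w1 ^ 2 + 2 * (w0 * e0 + w1 * e1) = 0 := by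
    unfold pw at hP1 hQ1; rw [he0, he1, hw0, hw1]; linarith
  have hwg : w0 ^ 2 + w1 ^ 2 + 2 * (w0 * g0 + w1 * g1) = 0 := by
    unfold pw at hP3 hQ3; rw [hg0, hg1, hw0, hw1]; linarith
  have hdet : e0 * g1 - e1 * g0 ≠ 0 := by
    intro hd
    have hwne : w0 * e0 + w1 * e1 ≠ 0 := by intro h; rw [h] at hwe; linarith
    have h0 : (w0 * e0 + w1 * e1) * (e0 - g0) = 0 := by
      linear_combination (e0 / 2) * hwe - (e0 / 2) * hwg + w1 * hd
    have h1 : (w0 * e0 + w1 * e1) * (e1 - g1) = 0 := by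
      linear_combination (e1 / 2) * hwe - (e1 / 2) * hwg - w0 * hd
    have h0 := (mul_eq_zero.1 h0).resolve_left hwne
    have h1 := (mul_eq_zero.1 h1).resolve_left hwne
    apply hc
    ext i
    fin_cases i
    · simp; linarith
    · simp; linarith
  have hdet2 : 0 < (e0 * g1 - e1 * g0) ^ 2 := by positivity
  have hcs : (e0 * g0 + e1 * g1) ^ 2 < (C1.radius * C3.radius) ^ 2 := by
    rw [mul_pow, ← hee, ← hgg]; nlinarith
  obtain ⟨hlo, hhi⟩ := abs_lt_of_sq_lt_sq' hcs (by positivity)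
  obtain ⟨u, hu⟩ : ∃ u : Plane, u = !₂[C1.radius * g0 - C3.radius * e0,
    C1.radius * g1 - C3.radius * e1] := ⟨_, rfl⟩
  obtain ⟨v, hv⟩ : ∃ u : Plane, u = !₂[-(C1.radius * g0 + C3.radius * e0),
    -(C1.radius * g1 + C3.radius * e1)] := ⟨_, rfl⟩
  have hu0 : u 0 = C1.radius * g0 - C3.radius * e0 := by simp [hu]
  have hu1 : u 1 = C1.radius * g1 - C3.radius * e1 := by simp [hu]
  have hv0 : v 0 = -(C1.radius * g0 + C3.radius * e0) := by simp [hv]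
  have hv1 : v 1 = -(C1.radius * g1 + C3.radius * e1) := by simp [hv]
  have hue : u 0 * e0 + u 1 * e1 < 0 := by
    have : u 0 * e0 + u 1 * e1 = C1.radius * ((e0 * g0 + e1 * g1) - C1.radius * C3.radius) := by
      rw [hu0, hu1]; linear_combination (-C3.radius) * hee
    rw [this]; exact mul_neg_of_pos_of_neg hr1 (by linarith)
  have hug : -(u 0 * g0 + u 1 * g1) < 0 := by
    have : -(u 0 * g0 + u 1 * g1)
        = C3.radius * ((e0 * g0 + e1 * g1) - C1.radius * C3.radius) := by
      rw [hu0, hu1]; linear_combination (-C1.radius) * hgg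
    rw [this]; exact mul_neg_of_pos_of_neg hr3 (by linarith)
  have hve : v 0 * e0 + v 1 * e1 < 0 := by
    have : v 0 * e0 + v 1 * e1 = C1.radius * (-(e0 * g0 + e1 * g1) - C1.radius * C3.radius) := by
      rw [hv0, hv1]; linear_combination (-C3.radius) * hee
    rw [this]; exact mul_neg_of_pos_of_neg hr1 (by linarith)
  have hvg : v 0 * g0 + v 1 * g1 < 0 := by
    have : v 0 * g0 + v 1 * g1
        = C3.radius * (-(e0 * g0 + e1 * g1) - C1.radius * C3.radius) := by
      rw [hv0, hv1]; linear_combination (-C1.radius) * hgg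
    rw [this]; exact mul_neg_of_pos_of_neg hr3 (by linarith)
  obtain ⟨ε, k1, k2, k3, k4, k5, k6⟩ := ((ev_pw C2 P u hP2).and <| (ev_pw C2 P v hP2).and <|
    (ev_neg _ (u 0 ^ 2 + u 1 ^ 2) hue).and <| (ev_neg _ (-(u 0 ^ 2 + u 1 ^ 2)) hug).and <|
    (ev_neg _ (v 0 ^ 2 + v 1 ^ 2) hve).and (ev_neg _ (v 0 ^ 2 + v 1 ^ 2) hvg)).exists
  have a1 := pw_add C1 P u hP1 ε
  have a2 := pw_add C1 P v hP1 ε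
  have a3 := pw_add C3 P u hP3 ε
  have a4 := pw_add C3 P v hP3 ε
  rw [← he0, ← he1] at a1 a2
  rw [← hg0, ← hg1] at a3 a4
  have b1 : pw C1 (P + ε • u) < 0 := by linarith
  have b2 : pw C1 (P + ε • v) < 0 := by linarith
  have b3 : 0 < pw C3 (P + ε • u) := by linarith
  have b4 : pw C3 (P + ε • v) < 0 := by linarith
  have hpre : IsPreconnected (segment ℝ (P + ε • v) (P + ε • u)) :=
    (convex_segment _ _).isPreconnected
  obtain ⟨x, hx, hx0⟩ := hpre.intermediate_value (left_mem_segment ℝ _ _)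
    (right_mem_segment ℝ _ _) (pw_continuous C3).continuousOn ⟨b4.le, b3.le⟩
  refine ⟨x, ?_, ?_, hx0⟩
  · rw [← mem_ball_pw] at *
    exact (convex_ball _ _).segment_subset b2 b1 hx
  · rw [← mem_ball_pw] at k1 k2 ⊢
    exact (convex_ball _ _).segment_subset k2 k1 hx

lemma lens_pw {F : Finset Circle2} {C1 C2 : Circle2} (h : CreatesLens F C1 C2) {C : Circle2}
    (hC : C ∈ F) (x : Plane) (h1 : pw C1 x < 0) (h2 : pw C2 x < 0) (h3 : pw C x = 0) : False := by
  have := h.2 C hC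
  have hx : x ∈ interior (C1.disc ∩ C2.disc) ∩ C.sphere := by
    refine ⟨?_, (mem_sphere_pw _ _).2 h3⟩
    rw [interior_inter]
    exact ⟨Metric.ball_subset_interior_closedBall ((mem_ball_pw _ _).2 h1),
      Metric.ball_subset_interior_closedBall ((mem_ball_pw _ _).2 h2)⟩
  rw [this] at hx
  exact hx

lemma lens_symm {F : Finset Circle2} {C1 C2 : Circle2} (h : CreatesLens F C1 C2) :
    CreatesLens F C2 C1 := by
  unfold CreatesLens at *
  rwa [inter_comm C2.sphere, inter_comm C2.disc]

/-- Three points on the perpendicular bisector of two distinct points are collinear. -/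
lemma col (a b c P Q : Plane) (hPQ : P ≠ Q)
    (ha : dist P a = dist Q a) (hb : dist P b = dist Q b) (hc : dist P c = dist Q c) :
    Collinear ℝ {a, b, c} := by
  have key : ∀ a : Plane, dist P a = dist Q a →
      (Q 0 - P 0) * (2 * a 0 - P 0 - Q 0) + (Q 1 - P 1) * (2 * a 1 - P 1 - Q 1) = 0 := by
    intro a h
    have h : dist P a ^ 2 = dist Q a ^ 2 := by rw [h]
    rw [dist_sq_coord, dist_sq_coord] at h
    linear_combination h
  have ka := key a ha
  have hpos : (Q 0 - P 0) ^ 2 + (Q 1 - P 1) ^ 2 ≠ 0 := by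
    rw [← dist_sq_coord]
    have := dist_pos.2 hPQ.symm
    positivity
  rw [collinear_iff_of_mem (p₀ := a) (by simp)]
  refine ⟨!₂[-(Q 1 - P 1), Q 0 - P 0], ?_⟩
  have gen : ∀ b : Plane, dist P b = dist Q b →
      ∃ r : ℝ, b = r • (!₂[-(Q 1 - P 1), Q 0 - P 0] : Plane) +ᵥ a := by
    intro b hb
    have kb := key b hb
    refine ⟨(-(Q 1 - P 1) * (b 0 - a 0) + (Q 0 - P 0) * (b 1 - a 1)) /
      ((Q 0 - P 0) ^ 2 + (Q 1 - P 1) ^ 2), ?_⟩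
    ext i
    fin_cases i
    · simp
      field_simp
      linear_combination (Q 0 - P 0) / 2 * (kb - ka)
    · simp
      field_simp
      linear_combination (Q 1 - P 1) / 2 * (kb - ka)
  intro p hp
  simp only [mem_insert_iff, mem_singleton_iff] at hp
  rcases hp with rfl | rfl | rfl
  exacts [gen _ ha, gen _ hb, gen _ hc]

lemma core (F : Finset Circle2)
    (hnotouch : ∀ C1 ∈ F, ∀ C2 ∈ F, C1 ≠ C2 → (C1.sphere ∩ C2.sphere).ncard = 2)
    (C1 C2 C3 C4 : Circle2)
    (h1 : C1 ∈ F) (h3 : C3 ∈ F)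
    (hL12 : CreatesLens F C1 C2) (hL34 : CreatesLens F C3 C4)
    (h13 : C1.center ≠ C3.center)
    (hcol : ¬ Collinear ℝ {C1.center, C2.center, C3.center})
    (α γ β δ : ℝ) (hβ : 0 ≤ β) (hδ : 0 < δ) (hβ' : 0 < β) (κ : ℝ) (hκ : 0 ≤ κ)
    (hrel : ∀ x, α * pw C1 x + γ * pw C3 x - β * pw C2 x - δ * pw C4 x = κ) : False := by
  obtain ⟨P, Q, hPQ, hs⟩ := Set.ncard_eq_two.1
    (hnotouch C1 h1 C3 h3 (fun h => h13 (by rw [h])))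
  have hP : P ∈ C1.sphere ∩ C3.sphere := by rw [hs]; simp
  have hQ : Q ∈ C1.sphere ∩ C3.sphere := by rw [hs]; simp
  have hP1 := (mem_sphere_pw _ _).1 hP.1
  have hP3 := (mem_sphere_pw _ _).1 hP.2
  have hQ1 := (mem_sphere_pw _ _).1 hQ.1
  have hQ3 := (mem_sphere_pw _ _).1 hQ.2
  have main : ∀ P Q : Plane, P ≠ Q → pw C1 P = 0 → pw C3 P = 0 → pw C1 Q = 0 → pw C3 Q = 0 →
      pw C2 P = 0 := by
    intro P Q hPQ hP1 hP3 hQ1 hQ3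
    have t2 : 0 ≤ pw C2 P := by
      by_contra! h
      obtain ⟨x, x1, x2, x3⟩ := enter C1 C2 C3 P Q hPQ h13 hP1 hP3 hQ1 hQ3 h
      exact lens_pw hL12 h3 x x1 x2 x3
    have t4 : 0 ≤ pw C4 P := by
      by_contra! h
      obtain ⟨x, x1, x2, x3⟩ := enter C3 C4 C1 P Q hPQ h13.symm hP3 hP1 hQ3 hQ1 h
      exact lens_pw hL34 h1 x x1 x2 x3
    have := hrel P
    rw [hP1, hP3] at this
    have s4 := mul_nonneg hδ.le t4
    by_contra hne
    have : 0 < β * pw C2 P := mul_pos hβ' (lt_of_le_of_ne t2 (Ne.symm hne))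
    linarith
  have hP2 := main P Q hPQ hP1 hP3 hQ1 hQ3
  have hQ2 := main Q P hPQ.symm hQ1 hQ3 hP1 hP3
  have conv : ∀ C, pw C P = 0 → pw C Q = 0 → dist P C.center = dist Q C.center := by
    intro C a b
    rw [← mem_sphere_pw, Circle2.sphere, Metric.mem_sphere] at a b
    rw [a, b]
  exact hcol (col _ _ _ P Q hPQ (conv _ hP1 hQ1) (conv _ hP2 hQ2) (conv _ hP3 hQ3))

lemma convpos_seg {s : Set Plane} (hs : ConvexPosition s) {x y z : Plane} (hx : x ∈ s)
    (hy : y ∈ s) (hz : z ∈ s) (hxy : x ≠ y) (hxz : x ≠ z) : x ∉ segment ℝ y z := by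
  intro h
  apply hs x hx
  rw [← convexHull_pair] at h
  refine convexHull_mono ?_ h
  intro t ht
  rcases ht with rfl | rfl
  · exact ⟨hy, fun h => hxy h.symm⟩
  · exact ⟨hz, fun h => hxz h.symm⟩

lemma convpos_col {s : Set Plane} (hs : ConvexPosition s) {x y z : Plane} (hx : x ∈ s)
    (hy : y ∈ s) (hz : z ∈ s) (hxy : x ≠ y) (hxz : x ≠ z) (hyz : y ≠ z) :
    ¬ Collinear ℝ {x, y, z} := by
  intro h
  rcases h.wbtw_or_wbtw_or_wbtw with h | h | h
  · exact convpos_seg hs hy hx hz hxy.symm hyz h.mem_segment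
  · exact convpos_seg hs hz hy hx hyz.symm hxz.symm h.mem_segment
  · exact convpos_seg hs hx hz hy hxz hxy h.mem_segment

lemma quad_false (F : Finset Circle2)
    (hnotouch : ∀ C1 ∈ F, ∀ C2 ∈ F, C1 ≠ C2 → (C1.sphere ∩ C2.sphere).ncard = 2)
    (C1 C2 C3 C4 : Circle2)
    (h1 : C1 ∈ F) (h2 : C2 ∈ F) (h3 : C3 ∈ F) (h4 : C4 ∈ F)
    (hL12 : CreatesLens F C1 C2) (hL34 : CreatesLens F C3 C4)
    (hq : ConvexQuadrilateral C1.center C2.center C3.center C4.center) : False := by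
  obtain ⟨n12, n13, n14, n23, n24, n34, hcp, X, ⟨α, γ, hα, hγ, hαγ, hX1⟩,
    ⟨β, δ, hβ, hδ, hβδ, hX2⟩⟩ := hq
  have m1 : C1.center ∈ ({C1.center, C2.center, C3.center, C4.center} : Set Plane) := by simp
  have m2 : C2.center ∈ ({C1.center, C2.center, C3.center, C4.center} : Set Plane) := by simp
  have m3 : C3.center ∈ ({C1.center, C2.center, C3.center, C4.center} : Set Plane) := by simp
  have m4 : C4.center ∈ ({C1.center, C2.center, C3.center, C4.center} : Set Plane) := by simp
  have hXa : X ∈ segment ℝ C1.center C3.center := ⟨α, γ, hα, hγ, hαγ, hX1⟩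
  have hXb : X ∈ segment ℝ C2.center C4.center := ⟨β, δ, hβ, hδ, hβδ, hX2⟩
  have pα : 0 < α := by
    refine lt_of_le_of_ne hα (Ne.symm fun h => ?_)
    have : X = C3.center := by rw [← hX1, h, show γ = 1 by linarith]; simp
    exact convpos_seg hcp m3 m2 m4 n23.symm n34 (this ▸ hXb)
  have pγ : 0 < γ := by
    refine lt_of_le_of_ne hγ (Ne.symm fun h => ?_)
    have : X = C1.center := by rw [← hX1, h, show α = 1 by linarith]; simp
    exact convpos_seg hcp m1 m2 m4 n12 n14 (this ▸ hXb)
  have pβ : 0 < β := by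
    refine lt_of_le_of_ne hβ (Ne.symm fun h => ?_)
    have : X = C4.center := by rw [← hX2, h, show δ = 1 by linarith]; simp
    exact convpos_seg hcp m4 m1 m3 n14.symm n34.symm (this ▸ hXa)
  have pδ : 0 < δ := by
    refine lt_of_le_of_ne hδ (Ne.symm fun h => ?_)
    have : X = C2.center := by rw [← hX2, h, show β = 1 by linarith]; simp
    exact convpos_seg hcp m2 m1 m3 n12.symm n23 (this ▸ hXa)
  have hE : α • C1.center + γ • C3.center = β • C2.center + δ • C4.center := by rw [hX1, hX2]
  have e0 : α * C1.center 0 + γ * C3.center 0 = β * C2.center 0 + δ * C4.center 0 := by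
    simpa using congrArg (fun v : Plane => v 0) hE
  have e1 : α * C1.center 1 + γ * C3.center 1 = β * C2.center 1 + δ * C4.center 1 := by
    simpa using congrArg (fun v : Plane => v 1) hE
  have hrel : ∀ x, α * pw C1 x + γ * pw C3 x - β * pw C2 x - δ * pw C4 x =
      α * pw C1 0 + γ * pw C3 0 - β * pw C2 0 - δ * pw C4 0 := by
    intro x
    unfold pw
    simp only [PiLp.zero_apply]
    linear_combination (x 0 ^ 2 + x 1 ^ 2) * (hαγ - hβδ) - 2 * x 0 * e0 - 2 * x 1 * e1
  rcases le_total 0 (α * pw C1 0 + γ * pw C3 0 - β * pw C2 0 - δ * pw C4 0) with hk | hk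
  · exact core F hnotouch C1 C2 C3 C4 h1 h3 hL12 hL34 n13
      (convpos_col hcp m1 m2 m3 n12 n13 n23) α γ β δ hβ pδ pβ _ hk hrel
  · exact core F hnotouch C2 C1 C4 C3 h2 h4 (lens_symm hL12) (lens_symm hL34) n24
      (convpos_col hcp m2 m1 m4 n12.symm n24 n14) β δ α γ hα pγ pα _ (neg_nonneg.2 hk)
      (fun x => by linear_combination -(hrel x))

/-- **Theorem.** In a family of pairwise intersecting, pairwise distinct circles with
no two circles touching (every two distinct circles meet in exactly two points), the
segments between the centers of two distinct lens-creating pairs are never avoiding. -/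
theorem lens_segments_not_avoiding (F : Finset Circle2)
    (hint : ∀ C1 ∈ F, ∀ C2 ∈ F, (C1.sphere ∩ C2.sphere).Nonempty)
    (hnotouch : ∀ C1 ∈ F, ∀ C2 ∈ F, C1 ≠ C2 → (C1.sphere ∩ C2.sphere).ncard = 2)
    (C1 C2 C3 C4 : Circle2)
    (h1 : C1 ∈ F) (h2 : C2 ∈ F) (h3 : C3 ∈ F) (h4 : C4 ∈ F)
    (h12 : C1 ≠ C2) (h34 : C3 ≠ C4)
    (hpairs : ({C1, C2} : Finset Circle2) ≠ ({C3, C4} : Finset Circle2))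
    (hL12 : CreatesLens F C1 C2) (hL34 : CreatesLens F C3 C4) :
    ¬ Avoiding C1.center C2.center C3.center C4.center := by
  rintro (h | h)
  · exact quad_false F hnotouch C1 C2 C3 C4 h1 h2 h3 h4 hL12 hL34 h
  · exact quad_false F hnotouch C1 C2 C4 C3 h1 h2 h4 h3 hL12 (lens_symm hL34) h
end
end

section
/- Let F be a finite family of pairwise intersecting, pairwise distinct circles in the plane ℝ², let C1 ∈ F have center A1, and let M be a point on the circle C1. Then there is at most one circle C2 ∈ F, with center A2, such that {C1, C2} creates a lens in the arrangement A(F), M ∈ C2 (so M is a vertex of the lens), and the points A1, A2, M appear in clockwise order, i.e., the determinant of the 2×2 matrix with columns A2 − A1 and M − A1 is negative. -/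
open Metric Set

noncomputable section

lemma mem_sphere_iff_sq (C : Circle2) (p : Plane) :
    p ∈ C.sphere ↔ (p 0 - C.center 0) ^ 2 + (p 1 - C.center 1) ^ 2 = C.radius ^ 2 := by
  unfold Circle2.sphere
  rw [Metric.mem_sphere, EuclideanSpace.dist_eq, Fin.sum_univ_two, Real.dist_eq, Real.dist_eq,
    sq_abs, sq_abs, Real.sqrt_eq_iff_eq_sq (by positivity) C.radius_pos.le]

lemma mem_ball_iff_sq (C : Circle2) (p : Plane) :
    p ∈ Metric.ball C.center C.radius ↔
      (p 0 - C.center 0) ^ 2 + (p 1 - C.center 1) ^ 2 < C.radius ^ 2 := by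
  rw [Metric.mem_ball, EuclideanSpace.dist_eq, Fin.sum_univ_two, Real.dist_eq, Real.dist_eq,
    sq_abs, sq_abs, Real.sqrt_lt' C.radius_pos]

lemma mem_interior_lens (C1 C2 : Circle2) (p : Plane)
    (h1 : (p 0 - C1.center 0) ^ 2 + (p 1 - C1.center 1) ^ 2 < C1.radius ^ 2)
    (h2 : (p 0 - C2.center 0) ^ 2 + (p 1 - C2.center 1) ^ 2 < C2.radius ^ 2) :
    p ∈ interior (C1.disc ∩ C2.disc) := by
  rw [interior_inter]
  exact ⟨Metric.ball_subset_interior_closedBall ((mem_ball_iff_sq C1 p).2 h1),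
    Metric.ball_subset_interior_closedBall ((mem_ball_iff_sq C2 p).2 h2)⟩

/-- A small positive perturbation parameter. -/
lemma exists_small (x k : ℝ) (hx : 0 < x) : ∃ e > 0, ∀ t, 0 < t → t ≤ e → 0 < x + t * k := by
  refine ⟨x / (2 * (|k| + 1)), by positivity, fun t ht hte => ?_⟩
  rw [le_div_iff₀ (by positivity)] at hte
  nlinarith [neg_abs_le k, abs_nonneg k]

/-- If the circle `C3` leaves `M` into the lens of `C1`, `C2`, it meets the lens interior. -/
lemma enters_lens (C1 C2 C3 : Circle2) (M : Plane)
    (hM1 : M ∈ C1.sphere) (hM2 : M ∈ C2.sphere) (hM3 : M ∈ C3.sphere)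
    (a0 a1 b0 b1 c0 c1 : ℝ)
    (ha0 : a0 = C1.center 0 - M 0) (ha1 : a1 = C1.center 1 - M 1)
    (hb0 : b0 = C2.center 0 - M 0) (hb1 : b1 = C2.center 1 - M 1)
    (hc0 : c0 = C3.center 0 - M 0) (hc1 : c1 = C3.center 1 - M 1)
    (hac : 0 < a1 * c0 - a0 * c1)
    (hbc : 0 < b1 * c0 - b0 * c1 ∨
      (b1 * c0 - b0 * c1 = 0 ∧ 0 < c0 * (b0 - c0) + c1 * (b1 - c1))) :
    (interior (C1.disc ∩ C2.disc) ∩ C3.sphere).Nonempty := by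
  rw [mem_sphere_iff_sq] at hM1 hM2 hM3
  obtain ⟨t, ht, hta, htb⟩ : ∃ t > 0,
      0 < a1 * c0 - a0 * c1 + t * (c0 * (a0 - c0) + c1 * (a1 - c1)) ∧
      0 < b1 * c0 - b0 * c1 + t * (c0 * (b0 - c0) + c1 * (b1 - c1)) := by
    obtain ⟨e, he, h⟩ := exists_small _ (c0 * (a0 - c0) + c1 * (a1 - c1)) hac
    rcases hbc with hbc | ⟨h0, hbc⟩
    · obtain ⟨f, hf, h'⟩ := exists_small _ (c0 * (b0 - c0) + c1 * (b1 - c1)) hbc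
      exact ⟨min e f, lt_min he hf, h _ (lt_min he hf) (min_le_left _ _),
        h' _ (lt_min he hf) (min_le_right _ _)⟩
    · refine ⟨e, he, h e he le_rfl, ?_⟩
      rw [h0, zero_add]
      positivity
  have hcpos : 0 < c0 ^ 2 + c1 ^ 2 := by
    have := C3.radius_pos
    have : 0 < C3.radius ^ 2 := by positivity
    subst hc0 hc1
    nlinarith
  -- direction v and scale s
  obtain ⟨v0, hv0⟩ : ∃ v0, v0 = -c1 + t * c0 := ⟨_, rfl⟩
  obtain ⟨v1, hv1⟩ : ∃ v1, v1 = c0 + t * c1 := ⟨_, rfl⟩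
  have hvv : v0 ^ 2 + v1 ^ 2 = (1 + t ^ 2) * (c0 ^ 2 + c1 ^ 2) := by subst hv0 hv1; ring
  obtain ⟨s, hs⟩ : ∃ s, s = 2 * t / (1 + t ^ 2) := ⟨_, rfl⟩
  have hspos : 0 < s := by rw [hs]; positivity
  have hs2 : s * (1 + t ^ 2) = 2 * t := by rw [hs]; field_simp
  have hvc : v0 * c0 + v1 * c1 = t * (c0 ^ 2 + c1 ^ 2) := by subst hv0 hv1; ring
  have key : s ^ 2 * (v0 ^ 2 + v1 ^ 2) = 2 * s * (v0 * c0 + v1 * c1) := by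
    rw [hvv, hvc]
    linear_combination s * (c0 ^ 2 + c1 ^ 2) * hs2
  have hva : 0 < s * (v0 * (a0 - c0) + v1 * (a1 - c1)) := by
    apply mul_pos hspos
    subst hv0 hv1
    linarith
  have hvb : 0 < s * (v0 * (b0 - c0) + v1 * (b1 - c1)) := by
    apply mul_pos hspos
    subst hv0 hv1
    linarith
  refine ⟨!₂[M 0 + s * v0, M 1 + s * v1], mem_interior_lens _ _ _ ?_ ?_,
    (mem_sphere_iff_sq _ _).2 ?_⟩
  · simp only [Matrix.cons_val_zero, Matrix.cons_val_one]
    rw [← hM1]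
    subst ha0 ha1
    linarith
  · simp only [Matrix.cons_val_zero, Matrix.cons_val_one]
    rw [← hM2]
    subst hb0 hb1
    linarith
  · simp only [Matrix.cons_val_zero, Matrix.cons_val_one]
    rw [← hM3]
    subst hc0 hc1
    linarith

/-- **Lemma (unique charging).** In a finite family of pairwise intersecting,
pairwise distinct circles, given a circle `C1` with center `A1` and a point `M` on
`C1`, there is at most one circle `C2` in the family (with center `A2`) such that
`{C1, C2}` creates a lens, `M` lies on `C2` (so `M` is a vertex of the lens), and
`A1, A2, M` appear in clockwise order (the determinant of the matrix with columns
`A2 - A1` and `M - A1` is negative). -/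
theorem at_most_one_clockwise_lens_at_vertex (F : Finset Circle2)
    (hint : ∀ C1 ∈ F, ∀ C2 ∈ F, (C1.sphere ∩ C2.sphere).Nonempty)
    (C1 : Circle2) (h1 : C1 ∈ F) (M : Plane) (hM : M ∈ C1.sphere) :
    ∀ C2 ∈ F, ∀ C2' ∈ F,
      (CreatesLens F C1 C2 ∧ M ∈ C2.sphere ∧
        (C2.center 0 - C1.center 0) * (M 1 - C1.center 1) -
          (C2.center 1 - C1.center 1) * (M 0 - C1.center 0) < 0) →
      (CreatesLens F C1 C2' ∧ M ∈ C2'.sphere ∧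
        (C2'.center 0 - C1.center 0) * (M 1 - C1.center 1) -
          (C2'.center 1 - C1.center 1) * (M 0 - C1.center 0) < 0) →
      C2 = C2' := by
  intro C2 h2 C3 h3 ⟨⟨_, hL2⟩, hM2, hd2⟩ ⟨⟨_, hL3⟩, hM3, hd3⟩
  have e23 := fun h h' => (enters_lens C1 C2 C3 M hM hM2 hM3 _ _ _ _ _ _ rfl rfl rfl rfl rfl rfl
    h h').ne_empty (hL2 C3 h3)
  have e32 := fun h h' => (enters_lens C1 C3 C2 M hM hM3 hM2 _ _ _ _ _ _ rfl rfl rfl rfl rfl rfl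
    h h').ne_empty (hL3 C2 h2)
  rw [mem_sphere_iff_sq] at hM2 hM3
  obtain ⟨a0, ha0⟩ : ∃ x, x = C1.center 0 - M 0 := ⟨_, rfl⟩
  obtain ⟨a1, ha1⟩ : ∃ x, x = C1.center 1 - M 1 := ⟨_, rfl⟩
  obtain ⟨b0, hb0⟩ : ∃ x, x = C2.center 0 - M 0 := ⟨_, rfl⟩
  obtain ⟨b1, hb1⟩ : ∃ x, x = C2.center 1 - M 1 := ⟨_, rfl⟩
  obtain ⟨c0, hc0⟩ : ∃ x, x = C3.center 0 - M 0 := ⟨_, rfl⟩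
  obtain ⟨c1, hc1⟩ : ∃ x, x = C3.center 1 - M 1 := ⟨_, rfl⟩
  rw [← ha0, ← ha1, ← hb0, ← hb1, ← hc0, ← hc1] at e23 e32
  have hab : 0 < a1 * b0 - a0 * b1 := by subst ha0 ha1 hb0 hb1; linarith
  have hac : 0 < a1 * c0 - a0 * c1 := by subst ha0 ha1 hc0 hc1; linarith
  have f23 : ¬ _ := e23 hac
  have f32 : ¬ _ := e32 hab
  push Not at f23 f32
  have hd : b1 * c0 - b0 * c1 = 0 := by linarith [f23.1, f32.1]
  have g23 := f23.2 hd
  have g32 := f32.2 (by linarith)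
  have hz : (b0 - c0) ^ 2 + (b1 - c1) ^ 2 = 0 := by
    -- `b = m c` with `m > 0`
    have hm0 : b0 * (a1 * c0 - a0 * c1) = c0 * (a1 * b0 - a0 * b1) := by
      linear_combination a0 * hd
    have hm1 : b1 * (a1 * c0 - a0 * c1) = c1 * (a1 * b0 - a0 * b1) := by
      linear_combination a1 * hd
    obtain ⟨m, hm⟩ : ∃ m, m = (a1 * b0 - a0 * b1) / (a1 * c0 - a0 * c1) := ⟨_, rfl⟩
    have hmpos : 0 < m := by rw [hm]; positivity
    have hb0' : b0 = m * c0 := by rw [hm]; field_simp; linarith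
    have hb1' : b1 = m * c1 := by rw [hm]; field_simp; linarith
    have hcpos : 0 < c0 ^ 2 + c1 ^ 2 := by
      by_contra hcon
      have h0 : c0 = 0 := pow_eq_zero_iff two_ne_zero |>.1 (by linarith [sq_nonneg c0, sq_nonneg c1] : c0 ^ 2 = 0)
      have h1 : c1 = 0 := pow_eq_zero_iff two_ne_zero |>.1 (by linarith [sq_nonneg c0, sq_nonneg c1] : c1 ^ 2 = 0)
      rw [h0, h1] at hac
      simp at hac
    rw [hb0', hb1'] at g23 g32
    have k1 : (m - 1) * (c0 ^ 2 + c1 ^ 2) ≤ 0 := by linarith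
    have k2 : (m * (1 - m)) * (c0 ^ 2 + c1 ^ 2) ≤ 0 := by linarith
    have l1 : m - 1 ≤ 0 := nonpos_of_mul_nonpos_left k1 hcpos
    have l2 : m * (1 - m) ≤ 0 := nonpos_of_mul_nonpos_left k2 hcpos
    have l3 : 1 - m ≤ 0 := nonpos_of_mul_nonpos_right l2 hmpos
    have l4 : m = 1 := by linarith
    rw [hb0', hb1', l4]; ring
  have z0 : b0 = c0 := sub_eq_zero.1 (pow_eq_zero_iff two_ne_zero |>.1
    (by linarith [sq_nonneg (b0 - c0), sq_nonneg (b1 - c1)] : (b0 - c0) ^ 2 = 0))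
  have z1 : b1 = c1 := sub_eq_zero.1 (pow_eq_zero_iff two_ne_zero |>.1
    (by linarith [sq_nonneg (b0 - c0), sq_nonneg (b1 - c1)] : (b1 - c1) ^ 2 = 0))
  have y0 : C2.center 0 = C3.center 0 := by linarith
  have y1 : C2.center 1 = C3.center 1 := by linarith
  have hr : C2.radius = C3.radius := by
    rw [y0, y1, hM3] at hM2
    exact ((sq_eq_sq₀ C3.radius_pos.le C2.radius_pos.le).1 hM2).symm
  have hc : C2.center = C3.center := by
    ext i
    fin_cases i
    · exact y0
    · exact y1
  cases C2
  cases C3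
  simp only at hc hr
  subst hc hr
  rfl
end
end
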